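/- Let N be a natural number, let a_1, ..., a_N be distinct positive real numbers, and let A_1, ..., A_N be positive real numbers. Then the vector v_A = (√A_1, ..., √A_N) is a cyclic vector for the weighted Cauchy matrix C_{a,A}; that is, the linear span of the vectors {C_{a,A}^n v_A : n ≥ 0} is all of ℂ^N. -/

import Mathlib

/-!
Write `C` for the weighted Cauchy matrix, `v` for `v_A` and `D = diag(a)`. Everything rests on the
Lyapunov identity `C D + D C = v vᵀ` (`cauchyMatrix_lyapunov`), and on `C` being Hermitian.

*Injectivity of `C`* (`cauchyMatrix_injective`). If `C u = 0`, pairing the identity with `u` gives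
`|⟨v, u⟩|² = 0`, and then the identity gives `C (D u) = 0`. Hence `⟨v, Dⁿ u⟩ = 0` for all `n`, and
as the `a_k` are distinct, a Vandermonde argument forces `u = 0`.

*No eigenvector of `C` is orthogonal to `v`* (`eq_zero_of_eigenvector_of_orthogonal`). If
`C w = μ w` with `⟨v, w⟩ = 0`, then `μ` is real and pairing the identity with `w` gives
`2 μ ⟨w, D w⟩ = 0`; as `D` is positive definite, `w = 0` or `μ = 0`, and injectivity settles the
second case.

*Cyclicity.* If the orbit of `v` did not span, the vectors annihilating it would form a nonzero
`C`-invariant subspace, which would contain an eigenvector of `C` orthogonal to `v`.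
-/

open Matrix MeasureTheory
open scoped ComplexOrder

/-- The weighted Cauchy matrix `C_{a,A} = (√(A_j A_k)/(a_j + a_k))_{j,k}`, as a complex matrix. -/
noncomputable def cauchyMatrix {N : ℕ} (a A : Fin N → ℝ) : Matrix (Fin N) (Fin N) ℂ :=
  Matrix.of fun j k => ((Real.sqrt (A j * A k) / (a j + a k) : ℝ) : ℂ)

/-- The vector `v_A = (√A_1, ..., √A_N)` in `ℂ^N`. -/
noncomputable def vecA {N : ℕ} (A : Fin N → ℝ) : Fin N → ℂ :=
  fun k => ((Real.sqrt (A k) : ℝ) : ℂ)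

section Helpers

variable {N : ℕ} {a A : Fin N → ℝ}

/-- The identity `C D + D C = v vᵀ` with `D = diag(a)`, applied to a vector `u`. -/
lemma cauchyMatrix_lyapunov (ha0 : ∀ k, 0 < a k) (hA : ∀ k, 0 < A k) (u : Fin N → ℂ) :
    cauchyMatrix a A *ᵥ (fun k => (a k : ℂ) * u k)
      + (fun j => (a j : ℂ) * (cauchyMatrix a A *ᵥ u) j) = (vecA A ⬝ᵥ u) • vecA A := by
  ext j
  simp only [Pi.add_apply, mulVec, dotProduct, Pi.smul_apply, smul_eq_mul, cauchyMatrix, vecA,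
    Matrix.of_apply, Finset.mul_sum, Finset.sum_mul, ← Finset.sum_add_distrib]
  refine Finset.sum_congr rfl fun k _ => ?_
  have h : ((a j : ℂ) + a k) ≠ 0 := by
    exact_mod_cast (add_pos (ha0 j) (ha0 k)).ne'
  rw [Real.sqrt_mul (hA j).le]
  push_cast
  field_simp
  ring

lemma cauchyMatrix_apply_comm (j k : Fin N) : cauchyMatrix a A j k = cauchyMatrix a A k j := by
  simp only [cauchyMatrix, Matrix.of_apply, mul_comm (A j), add_comm (a j)]

lemma cauchyMatrix_transpose : (cauchyMatrix a A)ᵀ = cauchyMatrix a A := by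
  ext j k
  exact cauchyMatrix_apply_comm k j

lemma cauchyMatrix_isHermitian : (cauchyMatrix a A)ᴴ = cauchyMatrix a A := by
  ext j k
  rw [conjTranspose_apply, cauchyMatrix_apply_comm]
  simp [cauchyMatrix]

lemma star_dotProduct_cauchyMatrix_mulVec (x y : Fin N → ℂ) :
    star x ⬝ᵥ (cauchyMatrix a A *ᵥ y) = star (cauchyMatrix a A *ᵥ x) ⬝ᵥ y := by
  rw [star_mulVec, cauchyMatrix_isHermitian, dotProduct_mulVec]

lemma star_dotProduct_vecA (u : Fin N → ℂ) : star u ⬝ᵥ vecA A = star (vecA A ⬝ᵥ u) := by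
  simp [dotProduct, vecA, mul_comm]

/-- `ker C` is orthogonal to `v` and invariant under `D = diag(a)`. -/
lemma cauchyMatrix_ker_step (ha0 : ∀ k, 0 < a k) (hA : ∀ k, 0 < A k) {u : Fin N → ℂ}
    (hu : cauchyMatrix a A *ᵥ u = 0) :
    vecA A ⬝ᵥ u = 0 ∧ cauchyMatrix a A *ᵥ (fun k => (a k : ℂ) * u k) = 0 := by
  have hS := cauchyMatrix_lyapunov ha0 hA u
  have h0 : (fun j => (a j : ℂ) * (cauchyMatrix a A *ᵥ u) j) = 0 := by
    ext j
    simp [hu]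
  rw [h0, add_zero] at hS
  have hv : vecA A ⬝ᵥ u = 0 := by
    have h := congrArg (fun z => star u ⬝ᵥ z) hS
    simp only [star_dotProduct_cauchyMatrix_mulVec, hu, star_zero, zero_dotProduct,
      dotProduct_smul, star_dotProduct_vecA, smul_eq_mul] at h
    simpa using h.symm
  exact ⟨hv, by rw [hS, hv, zero_smul]⟩

lemma cauchyMatrix_injective (ha : Function.Injective a) (ha0 : ∀ k, 0 < a k)
    (hA : ∀ k, 0 < A k) {u : Fin N → ℂ} (hu : cauchyMatrix a A *ᵥ u = 0) : u = 0 := by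
  have hC : ∀ n : ℕ, cauchyMatrix a A *ᵥ (fun k => (a k : ℂ) ^ n * u k) = 0 := by
    intro n
    induction n with
    | zero => simpa using hu
    | succ n ih =>
      have h := (cauchyMatrix_ker_step ha0 hA ih).2
      simpa only [pow_succ', mul_assoc] using h
  have hz : (fun k => vecA A k * u k) = 0 := by
    refine Matrix.eq_zero_of_forall_pow_sum_mul_pow_eq_zero (f := fun k => (a k : ℂ))
      (fun i j hij => ha (Complex.ofReal_injective hij)) fun n => ?_
    have h := (cauchyMatrix_ker_step ha0 hA (hC (n : ℕ))).1
    rw [← h, dotProduct]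
    exact Finset.sum_congr rfl fun k _ => by ring
  ext k
  have hk : vecA A k ≠ 0 := by
    simpa [vecA] using (Real.sqrt_pos.2 (hA k)).ne'
  exact (mul_eq_zero.1 (congrFun hz k)).resolve_left hk

lemma eq_zero_of_eigenvector_of_orthogonal (ha : Function.Injective a) (ha0 : ∀ k, 0 < a k)
    (hA : ∀ k, 0 < A k) {w : Fin N → ℂ} {μ : ℂ} (hw : cauchyMatrix a A *ᵥ w = μ • w)
    (hv : vecA A ⬝ᵥ w = 0) : w = 0 := by
  by_contra hne
  have hμ : star μ = μ := by
    have h := star_dotProduct_cauchyMatrix_mulVec (a := a) (A := A) w w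
    rw [hw, star_smul, dotProduct_smul, smul_dotProduct, smul_eq_mul, smul_eq_mul] at h
    exact (mul_right_cancel₀ (mt dotProduct_star_self_eq_zero.1 hne) h).symm
  -- The quadratic form `⟨w, D w⟩` is positive, because `D` is a positive diagonal matrix.
  have hD : star w ⬝ᵥ (fun k => (a k : ℂ) * w k) ≠ 0 := by
    intro h
    have hr : ∑ k, a k * Complex.normSq (w k) = 0 := by
      have h' : ((∑ k, a k * Complex.normSq (w k) : ℝ) : ℂ) = 0 := by
        rw [← h, dotProduct]
        push_cast
        refine Finset.sum_congr rfl fun k _ => ?_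
        rw [Complex.normSq_eq_conj_mul_self]
        simp only [Pi.star_apply, RCLike.star_def]
        ring
      exact_mod_cast h'
    rw [Finset.sum_eq_zero_iff_of_nonneg
      fun k _ => mul_nonneg (ha0 k).le (Complex.normSq_nonneg _)] at hr
    refine hne (funext fun k => ?_)
    exact Complex.normSq_eq_zero.1 ((mul_eq_zero.1 (hr k (Finset.mem_univ k))).resolve_left
      (ha0 k).ne')
  have hDC : (fun j => (a j : ℂ) * (cauchyMatrix a A *ᵥ w) j)
      = μ • (fun k => (a k : ℂ) * w k) := by
    ext j
    simp only [hw, Pi.smul_apply, smul_eq_mul]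
    ring
  have hS := cauchyMatrix_lyapunov ha0 hA w
  rw [hDC] at hS
  have h := congrArg (fun z => star w ⬝ᵥ z) hS
  simp only [hv, zero_smul, dotProduct_zero, dotProduct_add,
    star_dotProduct_cauchyMatrix_mulVec, hw, star_smul, smul_dotProduct, dotProduct_smul, hμ,
    smul_eq_mul] at h
  have hμ0 : μ = 0 := by
    rw [← two_mul] at h
    simpa [hD] using h
  exact hne (cauchyMatrix_injective ha ha0 hA (by rw [hw, hμ0, zero_smul]))

end Helpers

/-- The vector `v_A` is cyclic for the weighted Cauchy matrix: the span of
`{C_{a,A}^n v_A : n ≥ 0}` is all of `ℂ^N`. -/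
theorem cauchyMatrix_cyclic_vecA (N : ℕ) (a A : Fin N → ℝ)
    (ha : Function.Injective a) (ha0 : ∀ k, 0 < a k) (hA : ∀ k, 0 < A k) :
    Submodule.span ℂ (Set.range fun n : ℕ => (cauchyMatrix a A ^ n) *ᵥ vecA A) = ⊤ := by
  by_contra hne
  obtain ⟨f, hf0, hf⟩ := Submodule.exists_le_ker_of_lt_top _ (lt_top_iff_ne_top.2 hne)
  -- `K` is the annihilator of the orbit of `v` under the bilinear (not sesquilinear) pairing;
  -- since `C` is symmetric, `C ^ n` may be moved to the other side.
  let K : Submodule ℂ (Fin N → ℂ) :=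
    { carrier := {w | ∀ n : ℕ, vecA A ⬝ᵥ ((cauchyMatrix a A ^ n) *ᵥ w) = 0}
      add_mem' := fun {x y} hx hy n => by
        rw [mulVec_add, dotProduct_add, hx n, hy n, add_zero]
      zero_mem' := fun n => by rw [mulVec_zero, dotProduct_zero]
      smul_mem' := fun c x hx n => by rw [mulVec_smul, dotProduct_smul, hx n, smul_zero] }
  have hK : ∀ w ∈ K, Matrix.toLin' (cauchyMatrix a A) w ∈ K := fun w hw n => by
    rw [Matrix.toLin'_apply, mulVec_mulVec, ← pow_succ]
    exact hw (n + 1)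
  let w₀ : Fin N → ℂ := fun k => f (Pi.single k 1)
  have hfw : ∀ x, f x = x ⬝ᵥ w₀ := fun x => by
    conv_lhs => rw [pi_eq_sum_univ' x, map_sum]
    simp [dotProduct, w₀, Pi.single]
  have hw₀K : w₀ ∈ K := fun n => by
    have h : f ((cauchyMatrix a A ^ n) *ᵥ vecA A) = 0 := hf (Submodule.subset_span ⟨n, rfl⟩)
    rw [dotProduct_mulVec, ← mulVec_transpose, transpose_pow, cauchyMatrix_transpose, ← hfw, h]
  have hw₀ : w₀ ≠ 0 := fun h => hf0 (LinearMap.ext fun x => by simp [hfw, h])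
  have : Nontrivial K := ⟨⟨w₀, hw₀K⟩, 0, fun h => hw₀ (congrArg Subtype.val h)⟩
  obtain ⟨μ, hμ⟩ := Module.End.exists_eigenvalue ((Matrix.toLin' (cauchyMatrix a A)).restrict hK)
  obtain ⟨w, hw⟩ := hμ.exists_hasEigenvector
  have h1 : cauchyMatrix a A *ᵥ (w : Fin N → ℂ) = μ • (w : Fin N → ℂ) :=
    congrArg Subtype.val hw.apply_eq_smul
  have h2 : vecA A ⬝ᵥ (w : Fin N → ℂ) = 0 := by simpa using w.2 0
  exact hw.2 (Subtype.ext (eq_zero_of_eigenvector_of_orthogonal ha ha0 hA h1 h2))
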